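/- For every real number q with 0 < q < 1, ∫_0^q ∏_{j=1}^∞ (1−t^j)^8 (1−t^{6j})^6 / (1−t^{2j})^{10} dt = q ∏_{j=1}^∞ (1−q^j)^4 (1−q^{6j})^8 / ((1−q^{2j})^8 (1−q^{3j})^4). Moreover this common value equals (√2 − 1)^2/3 when q = e^{−2π/√6}, equals (2 − √3)^2/3 when q = e^{−2π/√3}, and equals (√6 − 2)^2/18 when q = e^{−2π/√2}. -/

import Mathlib

open Real

/-- The integrand `∏_{j=1}^∞ (1−t^j)^8 (1−t^{6j})^6 / (1−t^{2j})^{10}`. -/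
noncomputable def U2 (t : ℝ) : ℝ :=
  ∏' j : ℕ, (1 - t ^ (j + 1)) ^ 8 * (1 - t ^ (6 * (j + 1))) ^ 6 / (1 - t ^ (2 * (j + 1))) ^ 10

/-- The antiderivative `q ∏_{j=1}^∞ (1−q^j)^4 (1−q^{6j})^8 / ((1−q^{2j})^8 (1−q^{3j})^4)`. -/
noncomputable def V2 (q : ℝ) : ℝ :=
  q * ∏' j : ℕ, (1 - q ^ (j + 1)) ^ 4 * (1 - q ^ (6 * (j + 1))) ^ 8 /
    ((1 - q ^ (2 * (j + 1))) ^ 8 * (1 - q ^ (3 * (j + 1))) ^ 4)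

open Filter Topology


noncomputable def qE (Q : ℝ) (n : ℕ) : ℝ := ∏ i ∈ Finset.range n, (1 - Q ^ (i + 1))
noncomputable def qEi (Q : ℝ) : ℝ := ∏' i : ℕ, (1 - Q ^ (i + 1))

lemma summable_pow_succ {Q : ℝ} (h0 : 0 ≤ Q) (h1 : Q < 1) : Summable fun i : ℕ => Q ^ (i + 1) :=
  (summable_nat_add_iff 1).2 (summable_geometric_of_lt_one h0 h1)

lemma pow_succ_lt_one {Q : ℝ} (h0 : 0 ≤ Q) (h1 : Q < 1) (i : ℕ) : Q ^ (i + 1) < 1 :=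
  pow_lt_one₀ h0 h1 (by omega)

lemma qE_pos {Q : ℝ} (h0 : 0 ≤ Q) (h1 : Q < 1) (n : ℕ) : 0 < qE Q n :=
  Finset.prod_pos fun i _ => by have := pow_succ_lt_one h0 h1 i; linarith

lemma hasProd_qEi {Q : ℝ} (h0 : 0 ≤ Q) (h1 : Q < 1) :
    HasProd (fun i : ℕ => (1 - Q ^ (i + 1))) (qEi Q) := by
  have : Multipliable (fun i : ℕ => (1 + -Q ^ (i + 1))) :=
    Real.multipliable_one_add_of_summable (summable_pow_succ h0 h1).neg
  simpa [sub_eq_add_neg, qEi] using this.hasProd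

lemma qEi_pos {Q : ℝ} (h0 : 0 ≤ Q) (h1 : Q < 1) : 0 < qEi Q := by
  have hs : Summable fun i : ℕ => Real.log (1 - Q ^ (i + 1)) := by
    have := Real.summable_log_one_add_of_summable (summable_pow_succ h0 h1).neg
    simpa [sub_eq_add_neg] using this
  have := Real.rexp_tsum_eq_tprod (f := fun i : ℕ => (1 - Q ^ (i + 1)))
    (fun i => by have := pow_succ_lt_one h0 h1 i; linarith) hs
  rw [qEi, ← this]; exact Real.exp_pos _

lemma tendsto_qE {Q : ℝ} (h0 : 0 ≤ Q) (h1 : Q < 1) : Tendsto (qE Q) atTop (𝓝 (qEi Q)) :=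
  (hasProd_qEi h0 h1).tendsto_prod_nat

lemma qE_anti {Q : ℝ} (h0 : 0 ≤ Q) (h1 : Q < 1) : Antitone (qE Q) := by
  refine antitone_nat_of_succ_le fun n => ?_
  rw [qE, Finset.prod_range_succ, ← qE]
  have := (qE_pos h0 h1 n).le
  have h3 : 0 ≤ Q ^ (n+1) := by positivity
  nlinarith

lemma qE_ge {Q : ℝ} (h0 : 0 ≤ Q) (h1 : Q < 1) (n : ℕ) : qEi Q ≤ qE Q n :=
  (qE_anti h0 h1).le_of_tendsto (tendsto_qE h0 h1) n

lemma qE_le_one {Q : ℝ} (h0 : 0 ≤ Q) (h1 : Q < 1) (n : ℕ) : qE Q n ≤ 1 := by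
  have := qE_anti h0 h1 (Nat.zero_le n)
  simpa [qE] using this

noncomputable def qg (Q : ℝ) (n : ℤ) : ℝ := if n < 0 then 0 else (qE Q n.toNat)⁻¹

lemma qg_rec {Q : ℝ} (h0 : 0 ≤ Q) (h1 : Q < 1) (n : ℤ) :
    qg Q n = (1 - Q ^ (n + 1)) * qg Q (n + 1) := by
  rcases lt_trichotomy (n + 1) 0 with h | h | h
  · simp [qg, h, show n < 0 by omega]
  · simp [qg, h, show n < 0 by omega]
  · obtain ⟨m, rfl⟩ := Int.eq_ofNat_of_zero_le (show 0 ≤ n by omega)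
    have e : ((m : ℤ) + 1) = ((m + 1 : ℕ) : ℤ) := by push_cast; rfl
    rw [e]
    simp only [qg]
    rw [if_neg (by omega), if_neg (by omega), Int.toNat_natCast, Int.toNat_natCast, zpow_natCast]
    rw [show qE Q (m+1) = qE Q m * (1 - Q ^ (m + 1)) by rw [qE, Finset.prod_range_succ, ← qE]]
    have := pow_succ_lt_one h0 h1 m
    have h2 : (1 - Q ^ (m+1)) ≠ 0 := by linarith
    have := (qE_pos h0 h1 m).ne'
    field_simp

lemma qg_nonneg {Q : ℝ} (h0 : 0 ≤ Q) (h1 : Q < 1) (n : ℤ) : 0 ≤ qg Q n := by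
  unfold qg; split_ifs
  · rfl
  · exact inv_nonneg.2 (qE_pos h0 h1 _).le

lemma qg_le {Q : ℝ} (h0 : 0 ≤ Q) (h1 : Q < 1) (n : ℤ) : qg Q n ≤ (qEi Q)⁻¹ := by
  have := qEi_pos h0 h1
  unfold qg; split_ifs
  · positivity
  · exact inv_anti₀ this (qE_ge h0 h1 _)

lemma tendsto_qg {Q : ℝ} (h0 : 0 ≤ Q) (h1 : Q < 1) : Tendsto (qg Q) atTop (𝓝 (qEi Q)⁻¹) := by
  have h : Tendsto (fun n : ℤ => (qE Q n.toNat)⁻¹) atTop (𝓝 (qEi Q)⁻¹) := by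
    refine Tendsto.inv₀ ((tendsto_qE h0 h1).comp ?_) (qEi_pos h0 h1).ne'
    refine tendsto_atTop.2 fun b => ?_
    filter_upwards [eventually_ge_atTop (b : ℤ)] with n hn
    omega
  refine h.congr' ?_
  filter_upwards [eventually_ge_atTop (0 : ℤ)] with n hn
  rw [qg, if_neg (by omega)]

noncomputable def qe (x : ℝ) (s N : ℕ) (k : ℤ) : ℝ :=
  qE (x^2) (2 * N + s) * qg (x^2) (N - k) * qg (x^2) (N + k + s) * x ^ (k ^ 2 + s * k)

lemma qe_rec {x : ℝ} (h0 : 0 < x) (h1 : x < 1) (s N : ℕ) (k : ℤ) :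
    qe x s (N + 1) k = (1 + (x ^ (2*N+1+s))^2) * qe x s N k
      + x ^ (2*N+1+s) * qe x s N (k - 1) + x ^ (2*N+1+s) * qe x s N (k + 1) := by
  have hQ0 : 0 ≤ x^2 := by positivity
  have hQ1 : x^2 < 1 := by nlinarith
  have hx : x ≠ 0 := h0.ne'
  unfold qe
  have E2 : qE (x^2) (2 * (N+1) + s) = qE (x^2) (2 * N + s) * (1 - (x^2) ^ (2 * N + s + 1))
      * (1 - (x^2) ^ (2 * N + s + 2)) := by
    rw [show 2 * (N+1) + s = 2 * N + s + 1 + 1 by ring, qE, Finset.prod_range_succ,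
      Finset.prod_range_succ, ← qE]
  rw [E2]
  push_cast
  rw [show (N : ℤ) - (k + 1) = N - k - 1 by ring, show (N : ℤ) + (k - 1) + s = N + k + s - 1 by ring,
    show (N : ℤ) - (k - 1) = N - k + 1 by ring, show (N : ℤ) + (k + 1) + s = N + k + s + 1 by ring,
    show (N : ℤ) + 1 - k = N - k + 1 by ring, show (N : ℤ) + 1 + k + s = N + k + s + 1 by ring]
  have hM : ∃ M : ℤ, M = N - k := ⟨_, rfl⟩
  have hL : ∃ L : ℤ, L = N + k + s := ⟨_, rfl⟩
  obtain ⟨M, hM⟩ := hM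
  obtain ⟨L, hL⟩ := hL
  rw [← hM, ← hL]
  have r1 := qg_rec hQ0 hQ1 M
  have r2 := qg_rec hQ0 hQ1 (M - 1)
  have r3 := qg_rec hQ0 hQ1 L
  have r4 := qg_rec hQ0 hQ1 (L - 1)
  rw [sub_add_cancel] at r2 r4
  rw [r2, r4, r1, r3]
  generalize qg (x^2) (M+1) = A
  generalize qg (x^2) (L+1) = B
  generalize qE (x^2) (2*N+s) = C
  have p1 : (x^2) ^ (2 * N + s + 1) = (x^2) ^ M * (x^2)^L * x^2 := by
    rw [← zpow_add₀ (by positivity), ← zpow_add_one₀ (by positivity), ← zpow_natCast]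
    congr 1; push_cast; omega
  have p2 : (x^2) ^ (2 * N + s + 2) = (x^2) ^ M * (x^2)^L * x^2 * x^2 := by
    rw [← p1, ← pow_succ]
  have p3 : (x ^ (2*N+1+s))^2 = (x^2) ^ M * (x^2)^L * x^2 := by
    rw [← p1]; ring
  have p4 : x ^ (2*N+1+s) * x ^ ((k-1)^2 + s * (k-1)) = (x^2)^M * x^2 * x ^ (k^2 + s*k) := by
    rw [← zpow_add_one₀ (by positivity), ← zpow_natCast, ← zpow_natCast x 2, ← zpow_mul, ← zpow_add₀ hx,
      ← zpow_add₀ hx]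
    congr 1; push_cast; rw [hM]; ring
  have p5 : x ^ (2*N+1+s) * x ^ ((k+1)^2 + s * (k+1)) = (x^2)^L * x^2 * x ^ (k^2 + s*k) := by
    rw [← zpow_add_one₀ (by positivity), ← zpow_natCast, ← zpow_natCast x 2, ← zpow_mul, ← zpow_add₀ hx,
      ← zpow_add₀ hx]
    congr 1; push_cast; rw [hL]; ring
  rw [p1, p2, p3, zpow_add_one₀ (by positivity), zpow_add_one₀ (by positivity)]
  generalize hy : (x^2)^M = Y at *
  generalize hz : (x^2)^L = Z at *
  have q1 : ∀ t : ℝ, x ^ (2*N+1+s) * (t * x ^ ((k-1)^2 + s * (k-1))) = t * (Y * x^2 * x ^ (k^2 + s*k)) := by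
    intro t; rw [← p4]; ring
  have q2 : ∀ t : ℝ, x ^ (2*N+1+s) * (t * x ^ ((k+1)^2 + s * (k+1))) = t * (Z * x^2 * x ^ (k^2 + s*k)) := by
    intro t; rw [← p5]; ring
  rw [q1, q2]
  ring

lemma hasSum_cast {ι : Type*} {f g : ι → ℝ} {a b : ℝ} (h : HasSum f a) (h1 : ∀ i, g i = f i) (h2 : b = a) :
    HasSum g b := by
  rw [h2, funext h1]; exact h

lemma hasSum_shift {f : ℤ → ℝ} {S : ℝ} (h : HasSum f S) (j : ℤ) : HasSum (fun k => f (k + j)) S :=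
  (Equiv.addRight j).hasSum_iff.2 h

lemma qe_hasSum_step {x : ℝ} (h0 : 0 < x) (h1 : x < 1) (s N : ℕ) {y S : ℝ} (hy : y ≠ 0)
    (h : HasSum (fun k : ℤ => y ^ k * qe x s N k) S) :
    HasSum (fun k : ℤ => y ^ k * qe x s (N+1) k)
      ((1 + y * x ^ (2*N+1+s)) * (1 + x ^ (2*N+1+s) / y) * S) := by
  have a := (h.mul_left (1 + (x ^ (2*N+1+s))^2)).add
    (((hasSum_shift h (-1)).mul_left (y * x ^ (2*N+1+s))).add
    ((hasSum_shift h 1).mul_left (x ^ (2*N+1+s) / y)))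
  refine hasSum_cast a (fun k => ?_) ?_
  · rw [qe_rec h0 h1, zpow_add₀ hy, zpow_add₀ hy, ← sub_eq_add_neg]
    simp only [zpow_neg_one, zpow_one]
    field_simp
    ring
  · field_simp; ring

lemma qe_hasSum_step' {x : ℝ} (h0 : 0 < x) (h1 : x < 1) (s N : ℕ) {S : ℝ}
    (h : HasSum (fun k : ℤ => (-1) ^ k * qe x s N k) 0)
    (h' : HasSum (fun k : ℤ => (k * (-1) ^ k) * qe x s N k) S) :
    HasSum (fun k : ℤ => (k * (-1) ^ k) * qe x s (N+1) k)
      ((1 - x ^ (2*N+1+s)) ^ 2 * S) := by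
  have a := (h'.mul_left (1 + (x ^ (2*N+1+s))^2)).add
    (((((hasSum_shift h' (-1)).add (hasSum_shift h (-1)))).mul_left (-x ^ (2*N+1+s))).add
    ((((hasSum_shift h' 1).sub (hasSum_shift h 1))).mul_left (-x ^ (2*N+1+s))))
  refine hasSum_cast a (fun k => ?_) ?_
  · rw [qe_rec h0 h1, zpow_add₀ (by norm_num), zpow_add₀ (by norm_num), ← sub_eq_add_neg]
    push_cast
    simp only [zpow_neg_one, zpow_one, inv_neg, inv_one]
    ring
  · ring

lemma qe_zero_zero {x : ℝ} (k : ℤ) : qe x 0 0 k = if k = 0 then 1 else 0 := by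
  split_ifs with h
  · simp [qe, h, qE, qg]
  · rcases lt_or_gt_of_ne h with h | h <;> simp [qe, qg, h]

lemma qe_one_zero {x : ℝ} (h0 : 0 < x) (h1 : x < 1) (k : ℤ) :
    qe x 1 0 k = if k = 0 then 1 else if k = -1 then 1 else 0 := by
  have : (1 - x^2) ≠ 0 := by nlinarith
  split_ifs with h h
  · simp [qe, h, qE, qg, this]
  · simp [qe, h, qE, qg, this]
  · rcases lt_or_gt_of_ne h with h' | h'
    · simp [qe, qg, show k + 1 < 0 by omega]
    · simp [qe, qg, show 0 < k by omega]

lemma qe_limit {x : ℝ} (h0 : 0 < x) (h1 : x < 1) (s : ℕ) (a : ℤ → ℝ) (P : ℕ → ℝ) (L : ℝ)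
    (hs : Summable fun k : ℤ => |a k| * x ^ (k ^ 2 + s * k))
    (h : ∀ N, HasSum (fun k => a k * qe x s N k) (P N)) (hL : Tendsto P atTop (𝓝 L)) :
    ∑' k : ℤ, a k * x ^ (k ^ 2 + s * k) = qEi (x^2) * L := by
  have hQ0 : 0 ≤ x^2 := by positivity
  have hQ1 : x^2 < 1 := by nlinarith
  have hE := qEi_pos hQ0 hQ1
  have key : Tendsto (fun N => ∑' k, a k * qe x s N k) atTop
      (𝓝 (∑' k : ℤ, a k * ((qEi (x^2) * (qEi (x^2))⁻¹ * (qEi (x^2))⁻¹) * x ^ (k ^ 2 + s * k)))) := by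
    refine tendsto_tsum_of_dominated_convergence
      (bound := fun k => ((qEi (x^2))⁻¹ * (qEi (x^2))⁻¹) * (|a k| * x ^ (k ^ 2 + s * k)))
      (hs.mul_left _) ?_ ?_
    · intro k
      refine Tendsto.const_mul _ (Tendsto.mul_const _ (Tendsto.mul (Tendsto.mul ?_ ?_) ?_))
      · refine (tendsto_qE hQ0 hQ1).comp (tendsto_atTop.2 fun b => ?_)
        filter_upwards [eventually_ge_atTop b] with n hn
        omega
      · refine (tendsto_qg hQ0 hQ1).comp (tendsto_atTop.2 fun b => ?_)
        filter_upwards [eventually_ge_atTop (b + k).toNat] with n hn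
        omega
      · refine (tendsto_qg hQ0 hQ1).comp (tendsto_atTop.2 fun b => ?_)
        filter_upwards [eventually_ge_atTop (b - k).toNat] with n hn
        omega
    · refine Eventually.of_forall fun N k => ?_
      have hw : 0 ≤ x ^ (k ^ 2 + s * k) := by positivity
      have c1 := qg_nonneg hQ0 hQ1 (N - k)
      have c2 := qg_nonneg hQ0 hQ1 (N + k + s)
      have c3 := (qE_pos hQ0 hQ1 (2 * N + s)).le
      rw [norm_mul, Real.norm_eq_abs, Real.norm_eq_abs, qe, abs_of_nonneg (mul_nonneg (mul_nonneg (mul_nonneg c3 c1) c2) hw)]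
      have : qE (x^2) (2 * N + s) * qg (x^2) (N - k) * qg (x^2) (N + k + s) ≤ 1 * (qEi (x^2))⁻¹ * (qEi (x^2))⁻¹ := by
        gcongr
        · exact qE_le_one hQ0 hQ1 _
        · exact qg_le hQ0 hQ1 _
        · exact qg_le hQ0 hQ1 _
      rw [one_mul] at this
      calc _ ≤ |a k| * ((qEi (x^2))⁻¹ * (qEi (x^2))⁻¹ * x ^ (k ^ 2 + s * k)) := by gcongr
        _ = _ := by ring
  have e1 : (fun N => ∑' k, a k * qe x s N k) = P := funext fun N => (h N).tsum_eq
  rw [e1] at key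
  have := tendsto_nhds_unique hL key
  rw [this, ← tsum_mul_left]
  congr 1; funext k
  field_simp


noncomputable def th3 (t : ℝ) : ℝ := ∑' k : ℤ, rexp (-t * (k:ℝ)^2)
noncomputable def th4 (t : ℝ) : ℝ := ∑' k : ℤ, (-1:ℝ)^k * rexp (-t * (k:ℝ)^2)
noncomputable def th2 (t : ℝ) : ℝ := ∑' k : ℤ, rexp (-t * ((k:ℝ)+1/2)^2)

lemma sum_gen {t : ℝ} (ht : 0 < t) (c : ℝ) (j : ℕ) :
    Summable fun k : ℤ => |(k:ℝ)|^j * rexp (-t * ((k:ℝ)+c)^2) := by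
  have h := summable_pow_mul_jacobiTheta₂_term_bound (|c| * t / π) (T := t / π) (by positivity) j
  refine Summable.of_nonneg_of_le (fun k => by positivity) (fun k => ?_) h
  push_cast
  refine mul_le_mul_of_nonneg_left (Real.exp_le_exp.2 ?_) (by positivity)
  have e : -π * (t / π * (k:ℝ)^2 - 2 * (|c| * t / π) * |(k:ℝ)|) = -t * (k:ℝ)^2 + 2 * t * (|c| * |(k:ℝ)|) := by
    field_simp; ring
  have h1 : -(c * k) ≤ |c| * |(k:ℝ)| := by rw [← abs_mul]; exact neg_le_abs _
  have h2 := mul_le_mul_of_nonneg_left h1 ht.le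
  have h3 : 0 ≤ t * c^2 := by positivity
  have e' : -π * (t / π * (k:ℝ)^2 - 2 * (|c| * t / π) * (|(k:ℝ)|)) = -t * (k:ℝ)^2 + 2 * t * (|c| * |(k:ℝ)|) := e
  rw [e']; nlinarith

lemma sum_zero {t : ℝ} (ht : 0 < t) (c : ℝ) :
    Summable fun k : ℤ => rexp (-t * ((k:ℝ)+c)^2) := by
  simpa using sum_gen ht c 0

lemma sum_three {t : ℝ} (ht : 0 < t) :
    Summable fun k : ℤ => rexp (-t * (k:ℝ)^2) := by
  simpa using sum_gen ht 0 0


lemma sum_four {t : ℝ} (ht : 0 < t) :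
    Summable fun k : ℤ => (-1:ℝ)^k * rexp (-t * (k:ℝ)^2) := by
  refine Summable.of_norm ?_
  refine (sum_three ht).congr fun k => ?_
  rw [norm_mul, Real.norm_eq_abs, abs_neg_one_zpow, one_mul, Real.norm_eq_abs, abs_of_pos (exp_pos _)]

lemma th3_pos {t : ℝ} (ht : 0 < t) : 0 < th3 t :=
  (sum_three ht).tsum_pos (fun _ => (exp_pos _).le) 0 (exp_pos _)
lemma th2_pos {t : ℝ} (ht : 0 < t) : 0 < th2 t :=
  (sum_zero ht _).tsum_pos (fun _ => (exp_pos _).le) 0 (exp_pos _)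

lemma exp_w0 (t : ℝ) (k : ℤ) : (rexp (-t)) ^ (k^2 + (0:ℕ) * k) = rexp (-t * (k:ℝ)^2) := by
  rw [← Real.rpow_intCast, ← Real.exp_mul]; congr 1; push_cast; ring
lemma exp_w1 (t : ℝ) (k : ℤ) : (rexp (-t)) ^ (k^2 + (1:ℕ) * k) = rexp (t/4) * rexp (-t * ((k:ℝ)+1/2)^2) := by
  rw [← Real.rpow_intCast, ← Real.exp_mul, ← Real.exp_add]; congr 1; push_cast; ring

lemma qe_hasSum {x : ℝ} (h0 : 0 < x) (h1 : x < 1) (s : ℕ) {y P0 : ℝ} (hy : y ≠ 0)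
    (hb : HasSum (fun k : ℤ => y ^ k * qe x s 0 k) P0) (N : ℕ) :
    HasSum (fun k : ℤ => y ^ k * qe x s N k)
      (P0 * ∏ i ∈ Finset.range N, ((1 + y * x ^ (2*i+1+s)) * (1 + x ^ (2*i+1+s) / y))) := by
  induction N with
  | zero => simpa using hb
  | succ N ih =>
    refine hasSum_cast (qe_hasSum_step h0 h1 s N hy ih) (fun _ => rfl) ?_
    rw [Finset.prod_range_succ]; ring

lemma qe_hasSum' {x : ℝ} (h0 : 0 < x) (h1 : x < 1) (s : ℕ) {P0 : ℝ}
    (hb : HasSum (fun k : ℤ => (-1) ^ k * qe x s 0 k) 0)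
    (hb' : HasSum (fun k : ℤ => (k * (-1) ^ k) * qe x s 0 k) P0) (N : ℕ) :
    HasSum (fun k : ℤ => (k * (-1) ^ k) * qe x s N k)
      (P0 * ∏ i ∈ Finset.range N, (1 - x ^ (2*i+1+s))^2) := by
  induction N with
  | zero => simpa using hb'
  | succ N ih =>
    have h := qe_hasSum h0 h1 s (by norm_num) hb N
    rw [zero_mul] at h
    refine hasSum_cast (qe_hasSum_step' h0 h1 s N h ih) (fun _ => rfl) ?_
    rw [Finset.prod_range_succ]; ring

lemma base0 (x : ℝ) (a : ℤ → ℝ) : HasSum (fun k : ℤ => a k * qe x 0 0 k) (a 0) := by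
  refine hasSum_cast (hasSum_single (0:ℤ) (f := fun k : ℤ => a k * qe x 0 0 k) fun k hk => ?_) (fun _ => rfl) ?_
  · simp [qe_zero_zero, hk]
  · simp [qe_zero_zero]

lemma base1 {x : ℝ} (h0 : 0 < x) (h1 : x < 1) (a : ℤ → ℝ) :
    HasSum (fun k : ℤ => a k * qe x 1 0 k) (a 0 + a (-1)) := by
  refine hasSum_cast (hasSum_sum_of_ne_finset_zero (s := {0, -1}) (f := fun k : ℤ => a k * qe x 1 0 k)
    fun k hk => ?_) (fun _ => rfl) ?_
  · simp at hk
    simp [qe_one_zero h0 h1, hk]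
  · simp [qe_one_zero h0 h1]

lemma tend_odd {x : ℝ} (h0 : 0 ≤ x) (h1 : x < 1) :
    Tendsto (fun N : ℕ => ∏ i ∈ Finset.range N, (1 - x ^ (2*i+1))) atTop (𝓝 (qEi x / qEi (x^2))) := by
  have hQ0 : 0 ≤ x^2 := by positivity
  have hQ1 : x^2 < 1 := by nlinarith
  have key : ∀ N : ℕ, ∏ i ∈ Finset.range N, (1 - x ^ (2*i+1)) = qE x (2*N) / qE (x^2) N := by
    intro N
    rw [eq_div_iff (qE_pos hQ0 hQ1 N).ne']
    induction N with
    | zero => simp [qE]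
    | succ N ih =>
      have e1 : qE x (2*(N+1)) = qE x (2*N) * (1 - x^(2*N+1)) * (1 - x^(2*N+2)) := by
        rw [show 2*(N+1) = 2*N+1+1 by ring, qE, Finset.prod_range_succ, Finset.prod_range_succ, ← qE]
      have e2 : qE (x^2) (N+1) = qE (x^2) N * (1 - (x^2)^(N+1)) := by
        rw [qE, Finset.prod_range_succ, ← qE]
      rw [e1, e2, Finset.prod_range_succ, ← ih, ← pow_mul]; ring
  simp only [key]
  refine Tendsto.div ((tendsto_qE h0 h1).comp (tendsto_atTop.2 fun b => ?_)) (tendsto_qE hQ0 hQ1)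
    (qEi_pos hQ0 hQ1).ne'
  filter_upwards [eventually_ge_atTop b] with n hn
  omega

lemma tend_oddp {x : ℝ} (h0 : 0 ≤ x) (h1 : x < 1) :
    Tendsto (fun N : ℕ => ∏ i ∈ Finset.range N, (1 + x ^ (2*i+1))) atTop
      (𝓝 ((qEi (x^2) / qEi (x^4)) / (qEi x / qEi (x^2)))) := by
  have hQ0 : 0 ≤ x^2 := by positivity
  have hQ1 : x^2 < 1 := by nlinarith
  have a := tend_odd hQ0 hQ1
  rw [← pow_mul] at a
  refine (a.div (tend_odd h0 h1) (div_pos (qEi_pos h0 h1) (qEi_pos hQ0 hQ1)).ne').congr fun N => ?_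
  rw [Pi.div_apply, ← Finset.prod_div_distrib]
  refine Finset.prod_congr rfl fun i _ => ?_
  have : x^(2*i+1) < 1 := pow_lt_one₀ h0 h1 (by omega)
  have h : 1 - x^(2*i+1) ≠ 0 := by linarith
  field_simp
  ring

lemma tend_evenp {x : ℝ} (h0 : 0 ≤ x) (h1 : x < 1) :
    Tendsto (fun N : ℕ => ∏ i ∈ Finset.range N, (1 + x ^ (i+1))) atTop
      (𝓝 (qEi (x^2) / qEi x)) := by
  have hQ0 : 0 ≤ x^2 := by positivity
  have hQ1 : x^2 < 1 := by nlinarith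
  refine ((tendsto_qE hQ0 hQ1).div (tendsto_qE h0 h1) (qEi_pos h0 h1).ne').congr fun N => ?_
  rw [Pi.div_apply, qE, qE, ← Finset.prod_div_distrib]
  refine Finset.prod_congr rfl fun i _ => ?_
  have : x^(i+1) < 1 := pow_lt_one₀ h0 h1 (by omega)
  have h : 1 - x^(i+1) ≠ 0 := by linarith
  field_simp
  ring

lemma xlt {t : ℝ} (ht : 0 < t) : rexp (-t) < 1 := by rw [exp_lt_one_iff]; linarith

lemma th3_prod {t : ℝ} (ht : 0 < t) : th3 t = qEi (rexp (-t) ^ 2) *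
    ((qEi (rexp (-t) ^ 2) / qEi (rexp (-t) ^ 4)) / (qEi (rexp (-t)) / qEi (rexp (-t) ^ 2)))^2 := by
  have h0 := exp_pos (-t)
  have h1 := xlt ht
  have := qe_limit h0 h1 0 (fun k => (1:ℝ)^k) _ ?_
    (fun N => qe_hasSum h0 h1 0 one_ne_zero (base0 _ _) N)
    (L := ((qEi (rexp (-t) ^ 2) / qEi (rexp (-t) ^ 4)) / (qEi (rexp (-t)) / qEi (rexp (-t) ^ 2)))^2) ?_
  · rw [← this, th3]
    refine tsum_congr fun k => ?_
    rw [exp_w0, one_zpow, one_mul]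
  · refine (sum_three ht).congr fun k => ?_
    rw [exp_w0, one_zpow, abs_one, one_mul]
  · refine ((tend_oddp h0.le h1).pow 2).congr fun N => ?_
    rw [zpow_zero, one_mul, ← Finset.prod_pow]
    refine Finset.prod_congr rfl fun i _ => ?_
    simp; ring

lemma th4_prod {t : ℝ} (ht : 0 < t) : th4 t = qEi (rexp (-t) ^ 2) *
    (qEi (rexp (-t)) / qEi (rexp (-t) ^ 2))^2 := by
  have h0 := exp_pos (-t)
  have h1 := xlt ht
  have := qe_limit h0 h1 0 (fun k => (-1:ℝ)^k) _ ?_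
    (fun N => qe_hasSum h0 h1 0 (by norm_num) (base0 _ _) N)
    (L := (qEi (rexp (-t)) / qEi (rexp (-t) ^ 2))^2) ?_
  · rw [← this, th4]
    refine tsum_congr fun k => ?_
    rw [exp_w0]
  · refine (sum_three ht).congr fun k => ?_
    rw [exp_w0, abs_neg_one_zpow, one_mul]
  · refine ((tend_odd h0.le h1).pow 2).congr fun N => ?_
    rw [zpow_zero, one_mul, ← Finset.prod_pow]
    refine Finset.prod_congr rfl fun i _ => ?_
    simp only [add_zero]; ring

lemma th2_prod {t : ℝ} (ht : 0 < t) : rexp (t/4) * th2 t = qEi (rexp (-t) ^ 2) *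
    (2 * (qEi (rexp (-t)^4) / qEi (rexp (-t) ^ 2))^2) := by
  have h0 := exp_pos (-t)
  have h1 := xlt ht
  have hQ0 : 0 ≤ rexp (-t)^2 := by positivity
  have hQ1 : rexp (-t)^2 < 1 := by nlinarith
  have := qe_limit h0 h1 1 (fun k => (1:ℝ)^k) _ ?_
    (fun N => qe_hasSum h0 h1 1 one_ne_zero (base1 h0 h1 _) N)
    (L := 2 * (qEi (rexp (-t)^4) / qEi (rexp (-t) ^ 2))^2) ?_
  · rw [← this, th2, ← tsum_mul_left]
    refine tsum_congr fun k => ?_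
    rw [exp_w1, one_zpow, one_mul]
  · refine ((sum_zero ht (1/2)).mul_left (rexp (t/4))).congr fun k => ?_
    rw [exp_w1, one_zpow, abs_one, one_mul]
  · have a := tend_evenp hQ0 hQ1
    rw [← pow_mul] at a
    refine ((a.pow 2).const_mul 2).congr fun N => ?_
    rw [one_zpow, one_zpow, ← Finset.prod_pow, one_add_one_eq_two]
    congr 1
    refine Finset.prod_congr rfl fun i _ => ?_
    rw [← pow_mul, one_mul, div_one]; ring

lemma jac_prod {t : ℝ} (ht : 0 < t) :
    ∑' k : ℤ, (k * (-1:ℝ)^k) * (rexp (t/4) * rexp (-t * ((k:ℝ)+1/2)^2)) = qEi (rexp (-t) ^ 2)^3 ∧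
    ∑' k : ℤ, ((-1:ℝ)^k) * (rexp (t/4) * rexp (-t * ((k:ℝ)+1/2)^2)) = 0 := by
  have h0 := exp_pos (-t)
  have h1 := xlt ht
  have hQ0 : 0 ≤ rexp (-t)^2 := by positivity
  have hQ1 : rexp (-t)^2 < 1 := by nlinarith
  have b0 : HasSum (fun k : ℤ => (-1:ℝ) ^ k * qe (rexp (-t)) 1 0 k) 0 :=
    hasSum_cast (base1 h0 h1 _) (fun _ => rfl) (by norm_num)
  have b1 : HasSum (fun k : ℤ => (k * (-1:ℝ) ^ k) * qe (rexp (-t)) 1 0 k) 1 :=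
    hasSum_cast (base1 h0 h1 _) (fun _ => rfl) (by norm_num)
  constructor
  · have := qe_limit h0 h1 1 (fun k => k * (-1:ℝ)^k) _ ?_
      (fun N => qe_hasSum' h0 h1 1 b0 b1 N) (L := qEi (rexp (-t) ^ 2)^2) ?_
    · rw [show qEi (rexp (-t) ^ 2)^3 = qEi (rexp (-t) ^ 2) * qEi (rexp (-t) ^ 2)^2 by ring, ← this]
      refine tsum_congr fun k => ?_
      rw [exp_w1]
    · refine ((sum_gen ht (1/2) 1).mul_left (rexp (t/4))).congr fun k => ?_
      rw [exp_w1, abs_mul, abs_neg_one_zpow]; ring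
    · refine ((tendsto_qE hQ0 hQ1).pow 2).congr fun N => ?_
      rw [one_mul, qE, ← Finset.prod_pow]
      refine Finset.prod_congr rfl fun i _ => ?_
      rw [← pow_mul]; ring
  · have := qe_limit h0 h1 1 (fun k => (-1:ℝ)^k) _ ?_
      (fun N => qe_hasSum h0 h1 1 (by norm_num) b0 N) (L := 0) ?_
    · rw [mul_zero] at this
      rw [← this]
      refine tsum_congr fun k => ?_
      rw [exp_w1]
    · refine ((sum_zero ht (1/2)).mul_left (rexp (t/4))).congr fun k => ?_
      rw [exp_w1, abs_neg_one_zpow]; ring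
    · simp


lemma tsum_split {F : ℤ × ℤ → ℝ} (hF : Summable F) :
    ∑' p, F p = ∑' p : ℤ × ℤ, F (p.1 + p.2, p.1 - p.2) + ∑' p : ℤ × ℤ, F (p.1 + p.2 + 1, p.1 - p.2) := by
  have i1 : Function.Injective fun p : ℤ × ℤ => (p.1 + p.2, p.1 - p.2) := by
    rintro ⟨a, b⟩ ⟨c, d⟩ h; simp only [Prod.mk.injEq] at h ⊢; omega
  have i2 : Function.Injective fun p : ℤ × ℤ => (p.1 + p.2 + 1, p.1 - p.2) := by
    rintro ⟨a, b⟩ ⟨c, d⟩ h; simp only [Prod.mk.injEq] at h ⊢; omega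
  have hc : IsCompl (Set.range fun p : ℤ × ℤ => (p.1 + p.2, p.1 - p.2))
      (Set.range fun p : ℤ × ℤ => (p.1 + p.2 + 1, p.1 - p.2)) := by
    constructor
    · rw [Set.disjoint_left]
      rintro _ ⟨⟨a, b⟩, rfl⟩ ⟨⟨c, d⟩, h⟩
      simp only [Prod.mk.injEq] at h; omega
    · rw [codisjoint_iff_le_sup]
      rintro ⟨a, b⟩ -
      rcases Int.even_or_odd' (a + b) with ⟨c, h | h⟩
      · left; exact ⟨(c, a - c), by simp; omega⟩
      · right; exact ⟨(c, a - 1 - c), by simp; omega⟩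
  have s1 := (hF.comp_injective i1).hasSum
  have s2 := (hF.comp_injective i2).hasSum
  exact (HasSum.add_isCompl hc (i1.hasSum_range_iff.2 s1) (i2.hasSum_range_iff.2 s2)).tsum_eq

lemma tsum_prod_mul {f g : ℤ → ℝ} (hf : Summable f) (hg : Summable g) :
    ∑' p : ℤ × ℤ, f p.1 * g p.2 = (∑' k, f k) * ∑' k, g k :=
  (tsum_mul_tsum_of_summable_norm hf.norm hg.norm).symm

lemma summable_prod_mul {f g : ℤ → ℝ} (hf : Summable f) (hg : Summable g) :
    Summable fun p : ℤ × ℤ => f p.1 * g p.2 :=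
  summable_mul_of_summable_norm hf.norm hg.norm

lemma mul_split {f g : ℤ → ℝ} (hf : Summable f) (hg : Summable g) :
    (∑' k, f k) * ∑' k, g k = ∑' p : ℤ × ℤ, f (p.1 + p.2) * g (p.1 - p.2)
      + ∑' p : ℤ × ℤ, f (p.1 + p.2 + 1) * g (p.1 - p.2) := by
  rw [← tsum_prod_mul hf hg, tsum_split (summable_prod_mul hf hg)]

lemma tsum_shift (f : ℤ → ℝ) (j : ℤ) : ∑' k, f (k + j) = ∑' k, f k :=
  (Equiv.addRight j).tsum_eq f

lemma summable_shift {f : ℤ → ℝ} (h : Summable f) (j : ℤ) : Summable fun k => f (k + j) :=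
  (Equiv.addRight j).summable_iff.2 h

lemma sgn_even (u v : ℤ) : (-1:ℝ)^(u+v) * (-1:ℝ)^(u-v) = 1 := by
  rw [← zpow_add₀ (by norm_num), show u + v + (u - v) = 2 * u by ring, zpow_mul]; norm_num
lemma sgn_odd (u v : ℤ) : (-1:ℝ)^(u+v+1) * (-1:ℝ)^(u-v) = -1 := by
  rw [← zpow_add₀ (by norm_num), show u + v + 1 + (u - v) = 2 * u + 1 by ring, zpow_add₀ (by norm_num), zpow_mul]; norm_num

lemma th3_sq {t : ℝ} (ht : 0 < t) : th3 t * th3 t = th3 (2*t) * th3 (2*t) + th2 (2*t) * th2 (2*t) := by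
  have h2 : 0 < 2 * t := by linarith
  have e := mul_split (sum_three ht) (sum_three ht)
  rw [th3, e, th3, th2, ← tsum_prod_mul (sum_three h2) (sum_three h2),
    ← tsum_prod_mul (sum_zero h2 _) (sum_zero h2 _)]
  congr 1 <;> refine tsum_congr fun p => ?_ <;> rw [← exp_add, ← exp_add] <;> congr 1 <;> push_cast <;> ring

lemma th4_sq {t : ℝ} (ht : 0 < t) : th4 t * th4 t = th3 (2*t) * th3 (2*t) - th2 (2*t) * th2 (2*t) := by
  have h2 : 0 < 2 * t := by linarith
  have e := mul_split (sum_four ht) (sum_four ht)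
  rw [th4, e, th3, th2, ← tsum_prod_mul (sum_three h2) (sum_three h2),
    ← tsum_prod_mul (sum_zero h2 _) (sum_zero h2 _), sub_eq_add_neg, ← tsum_neg]
  congr 1 <;> refine tsum_congr fun p => ?_
  · rw [mul_mul_mul_comm, sgn_even, one_mul, ← exp_add, ← exp_add]
    congr 1; push_cast; ring
  · rw [mul_mul_mul_comm, sgn_odd, ← exp_add, ← exp_add, neg_one_mul]
    congr 2; push_cast; ring

lemma th2_sq {t : ℝ} (ht : 0 < t) : th2 t * th2 t = 2 * (th2 (2*t) * th3 (2*t)) := by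
  have h2 : 0 < 2 * t := by linarith
  have e := mul_split (sum_zero ht (1/2)) (sum_zero ht (1/2))
  have e1 := tsum_prod_mul (sum_zero h2 (1/2)) (sum_three h2)
  have e2 := tsum_prod_mul (summable_shift (sum_three h2) 1) (sum_zero h2 (1/2))
  rw [tsum_shift (fun k => rexp (-(2*t) * (k:ℝ)^2)) 1] at e2
  have e' : 2 * (th2 (2*t) * th3 (2*t)) = th2 (2*t) * th3 (2*t) + th3 (2*t) * th2 (2*t) := by ring
  rw [e', th2, e, th2, th3, ← e1, ← e2]
  congr 1 <;> refine tsum_congr fun p => ?_ <;> rw [← exp_add, ← exp_add] <;> congr 1 <;> push_cast <;> ring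

lemma th_quartic {t : ℝ} (ht : 0 < t) : th3 t ^ 4 = th2 t ^ 4 + th4 t ^ 4 := by
  have a := th3_sq ht
  have b := th4_sq ht
  have c := th2_sq ht
  have : th3 t ^ 4 = (th3 t * th3 t)^2 := by ring
  rw [this, show th2 t ^ 4 = (th2 t * th2 t)^2 by ring, show th4 t ^ 4 = (th4 t * th4 t)^2 by ring, a, b, c]
  ring

/-- The cubic theta relation. -/
lemma th_cubic {t : ℝ} (ht : 0 < t) : th3 t * th3 (3*t) - th4 t * th4 (3*t) = th2 t * th2 (3*t) := by
  have h3 : 0 < 3 * t := by linarith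
  have a : th3 t * th3 (3*t) = _ := mul_split (sum_three ht) (sum_three h3)
  have b : th4 t * th4 (3*t) = _ := mul_split (sum_four ht) (sum_four h3)
  have c : th2 t * th2 (3*t) = _ := mul_split (sum_zero ht (1/2)) (sum_zero h3 (1/2))
  have b1 : ∑' p : ℤ × ℤ, (-1:ℝ)^(p.1+p.2) * rexp (-t * ((p.1+p.2:ℤ):ℝ)^2) *
      ((-1:ℝ)^(p.1-p.2) * rexp (-(3*t) * ((p.1-p.2:ℤ):ℝ)^2)) =
      ∑' p : ℤ × ℤ, rexp (-t * ((p.1+p.2:ℤ):ℝ)^2) * rexp (-(3*t) * ((p.1-p.2:ℤ):ℝ)^2) := by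
    refine tsum_congr fun p => ?_
    rw [mul_mul_mul_comm, sgn_even, one_mul]
  have b2 : ∑' p : ℤ × ℤ, (-1:ℝ)^(p.1+p.2+1) * rexp (-t * ((p.1+p.2+1:ℤ):ℝ)^2) *
      ((-1:ℝ)^(p.1-p.2) * rexp (-(3*t) * ((p.1-p.2:ℤ):ℝ)^2)) =
      -∑' p : ℤ × ℤ, rexp (-t * ((p.1+p.2+1:ℤ):ℝ)^2) * rexp (-(3*t) * ((p.1-p.2:ℤ):ℝ)^2) := by
    rw [← tsum_neg]
    refine tsum_congr fun p => ?_
    rw [mul_mul_mul_comm, sgn_odd, neg_one_mul]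
  rw [b1, b2] at b
  let e1 : ℤ × ℤ ≃ ℤ × ℤ := ⟨fun p => (p.1, p.1 - p.2), fun p => (p.1, p.1 - p.2),
    fun p => by ext <;> simp, fun p => by ext <;> simp⟩
  let e2 : ℤ × ℤ ≃ ℤ × ℤ := ⟨fun p => (p.2, p.2 - p.1 - 1), fun p => (p.1 - p.2 - 1, p.1),
    fun p => by ext <;> simp; ring, fun p => by ext <;> simp; ring⟩
  have c1 : ∑' p : ℤ × ℤ, rexp (-t * (((p.1+p.2:ℤ):ℝ)+1/2)^2) * rexp (-(3*t) * (((p.1-p.2:ℤ):ℝ)+1/2)^2) =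
      ∑' p : ℤ × ℤ, rexp (-t * ((p.1+p.2+1:ℤ):ℝ)^2) * rexp (-(3*t) * ((p.1-p.2:ℤ):ℝ)^2) := by
    rw [← e1.tsum_eq]
    refine tsum_congr fun p => ?_
    rw [← exp_add, ← exp_add]; congr 1; simp only [e1, Equiv.coe_fn_mk]; push_cast; ring
  have c2 : ∑' p : ℤ × ℤ, rexp (-t * (((p.1+p.2+1:ℤ):ℝ)+1/2)^2) * rexp (-(3*t) * (((p.1-p.2:ℤ):ℝ)+1/2)^2) =
      ∑' p : ℤ × ℤ, rexp (-t * ((p.1+p.2+1:ℤ):ℝ)^2) * rexp (-(3*t) * ((p.1-p.2:ℤ):ℝ)^2) := by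
    rw [← e2.tsum_eq (fun p : ℤ × ℤ => rexp (-t * ((p.1+p.2+1:ℤ):ℝ)^2) * rexp (-(3*t) * ((p.1-p.2:ℤ):ℝ)^2))]
    refine tsum_congr fun p => ?_
    rw [← exp_add, ← exp_add]; congr 1; simp only [e2, Equiv.coe_fn_mk]; push_cast; ring
  rw [c1, c2] at c
  rw [a, b, c]; ring

noncomputable def thA2 (t : ℝ) : ℝ := ∑' k : ℤ, ((k:ℝ)+1/2)^2 * rexp (-t * ((k:ℝ)+1/2)^2)
noncomputable def thA3 (t : ℝ) : ℝ := ∑' k : ℤ, (k:ℝ)^2 * rexp (-t * (k:ℝ)^2)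

lemma sum_two {t : ℝ} (ht : 0 < t) (c : ℝ) :
    Summable fun k : ℤ => ((k:ℝ)+c)^2 * rexp (-t * ((k:ℝ)+c)^2) := by
  refine Summable.of_nonneg_of_le (fun k => by positivity) (fun k => ?_)
    (((sum_gen ht c 2).mul_left 2).add ((sum_gen ht c 0).mul_left (2 * c^2)))
  have : ((k:ℝ)+c)^2 ≤ 2 * |(k:ℝ)|^2 + 2 * c^2 := by
    rw [sq_abs]; nlinarith [sq_nonneg ((k:ℝ) - c)]
  calc _ ≤ (2 * |(k:ℝ)|^2 + 2 * c^2) * rexp (-t * ((k:ℝ)+c)^2) := by gcongr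
    _ = _ := by ring

lemma sum_two' {t : ℝ} (ht : 0 < t) :
    Summable fun k : ℤ => (k:ℝ)^2 * rexp (-t * (k:ℝ)^2) := by
  simpa using sum_two ht 0

lemma hasDerivAt_gen {t : ℝ} (ht : 0 < t) (c : ℝ) :
    HasDerivAt (fun t => ∑' k : ℤ, rexp (-t * ((k:ℝ)+c)^2))
      (∑' k : ℤ, -((k:ℝ)+c)^2 * rexp (-t * ((k:ℝ)+c)^2)) t := by
  have h2 : 0 < t / 2 := by linarith
  refine hasDerivAt_tsum_of_isPreconnected (g := fun (k : ℤ) t => rexp (-t * ((k:ℝ)+c)^2))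
    (g' := fun (k : ℤ) t => -((k:ℝ)+c)^2 * rexp (-t * ((k:ℝ)+c)^2))
    (sum_two h2 c) isOpen_Ioi (isPreconnected_Ioi (a := t/2)) ?_ ?_ (y₀ := t) ?_ (sum_zero ht c) ?_
  · intro k y _
    have := ((hasDerivAt_id y).neg.mul_const (((k:ℝ)+c)^2)).exp
    refine this.congr_deriv ?_
    simp; ring
  · intro k y hy
    rw [Set.mem_Ioi] at hy
    rw [norm_mul, norm_neg, Real.norm_eq_abs, Real.norm_eq_abs, abs_of_pos (exp_pos _), abs_of_nonneg (sq_nonneg _)]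
    refine mul_le_mul_of_nonneg_left (exp_le_exp.2 ?_) (sq_nonneg _)
    nlinarith [sq_nonneg ((k:ℝ)+c)]
  · simp [ht]
  · simp [ht]

lemma hasDerivAt_th2 {t : ℝ} (ht : 0 < t) : HasDerivAt th2 (-thA2 t) t := by
  refine (hasDerivAt_gen ht (1/2)).congr_deriv ?_
  rw [thA2, ← tsum_neg]; simp only [neg_mul]
lemma hasDerivAt_th3 {t : ℝ} (ht : 0 < t) : HasDerivAt th3 (-thA3 t) t := by
  have := hasDerivAt_gen ht 0
  simp only [add_zero] at this
  refine this.congr_deriv ?_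
  rw [thA3, ← tsum_neg]; simp only [neg_mul]


noncomputable def thJ (t : ℝ) : ℝ := ∑' k : ℤ, (((k:ℝ)+1/2) * (-1:ℝ)^k) * rexp (-t * ((k:ℝ)+1/2)^2)

lemma sum_J0 {t : ℝ} (ht : 0 < t) :
    Summable fun k : ℤ => (-1:ℝ)^k * rexp (-t * ((k:ℝ)+1/2)^2) := by
  refine Summable.of_norm ((sum_zero ht (1/2)).congr fun k => ?_)
  rw [norm_mul, Real.norm_eq_abs, abs_neg_one_zpow, one_mul, Real.norm_eq_abs, abs_of_pos (exp_pos _)]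

lemma sum_J1 {t : ℝ} (ht : 0 < t) :
    Summable fun k : ℤ => (k * (-1:ℝ)^k) * rexp (-t * ((k:ℝ)+1/2)^2) := by
  refine Summable.of_norm ((sum_gen ht (1/2) 1).congr fun k => ?_)
  rw [norm_mul, norm_mul, Real.norm_eq_abs, Real.norm_eq_abs, abs_neg_one_zpow, mul_one, Real.norm_eq_abs, abs_of_pos (exp_pos _), pow_one]

lemma sum_J {t : ℝ} (ht : 0 < t) :
    Summable fun k : ℤ => (((k:ℝ)+1/2) * (-1:ℝ)^k) * rexp (-t * ((k:ℝ)+1/2)^2) := by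
  refine ((sum_J1 ht).add ((sum_J0 ht).mul_left (1/2))).congr fun k => ?_
  ring

lemma thJ_eq {t : ℝ} (ht : 0 < t) : rexp (t/4) * thJ t = qEi (rexp (-t) ^ 2)^3 := by
  obtain ⟨h1, h2⟩ := jac_prod ht
  rw [← h1, thJ, ← tsum_mul_left, ← sub_eq_zero]
  rw [← mul_zero (1/2 : ℝ), ← h2, ← tsum_mul_left]
  rw [← Summable.tsum_sub ((sum_J ht).mul_left _)]
  · refine tsum_congr fun k => ?_
    ring
  · refine ((sum_J1 ht).mul_left (rexp (t/4))).congr fun k => ?_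
    ring

lemma thJ_sq {t : ℝ} (ht : 0 < t) :
    thJ t * thJ t = 2 * (thA2 (2*t) * th3 (2*t) - th2 (2*t) * thA3 (2*t)) := by
  have h2 : 0 < 2 * t := by linarith
  have a : thJ t * thJ t = _ := mul_split (sum_J ht) (sum_J ht)
  have s1 := summable_prod_mul (sum_two h2 (1/2)) (sum_three h2)
  have s2 := summable_prod_mul (sum_zero h2 (1/2)) (sum_two' h2)
  have s3 := summable_prod_mul (summable_shift (sum_three h2) 1) (sum_two h2 (1/2))
  have s4 := summable_prod_mul (summable_shift (sum_two' h2) 1) (sum_zero h2 (1/2))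
  have e1 : _ = thA2 (2*t) * th3 (2*t) := tsum_prod_mul (sum_two h2 (1/2)) (sum_three h2)
  have e2 : _ = th2 (2*t) * thA3 (2*t) := tsum_prod_mul (sum_zero h2 (1/2)) (sum_two' h2)
  have e3 := tsum_prod_mul (summable_shift (sum_three h2) 1) (sum_two h2 (1/2))
  have e4 := tsum_prod_mul (summable_shift (sum_two' h2) 1) (sum_zero h2 (1/2))
  rw [tsum_shift (fun k => rexp (-(2*t) * (k:ℝ)^2)) 1, ← th3, ← thA2] at e3
  rw [tsum_shift (fun k => (k:ℝ)^2 * rexp (-(2*t) * (k:ℝ)^2)) 1, ← th2, ← thA3] at e4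
  have r : 2 * (thA2 (2*t) * th3 (2*t) - th2 (2*t) * thA3 (2*t)) =
    (thA2 (2*t) * th3 (2*t) - th2 (2*t) * thA3 (2*t)) + (th3 (2*t) * thA2 (2*t) - thA3 (2*t) * th2 (2*t)) := by ring
  rw [a, r, ← e1, ← e2, ← e3, ← e4, ← s1.tsum_sub s2, ← s3.tsum_sub s4]
  have x1 : ∀ p : ℤ × ℤ, rexp (-t * (((p.1+p.2:ℤ):ℝ)+1/2)^2) * rexp (-t * (((p.1-p.2:ℤ):ℝ)+1/2)^2)
      = rexp (-(2*t) * ((p.1:ℝ)+1/2)^2) * rexp (-(2*t) * (p.2:ℝ)^2) := by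
    intro p; rw [← exp_add, ← exp_add]; congr 1; push_cast; ring
  have x2 : ∀ p : ℤ × ℤ, rexp (-t * (((p.1+p.2+1:ℤ):ℝ)+1/2)^2) * rexp (-t * (((p.1-p.2:ℤ):ℝ)+1/2)^2)
      = rexp (-(2*t) * ((p.1+1:ℤ):ℝ)^2) * rexp (-(2*t) * ((p.2:ℝ)+1/2)^2) := by
    intro p; rw [← exp_add, ← exp_add]; congr 1; push_cast; ring
  congr 1
  · refine tsum_congr fun p => ?_
    rw [mul_mul_mul_comm, x1, mul_mul_mul_comm (((p.1+p.2:ℤ):ℝ)+1/2), sgn_even]; push_cast; ring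
  · refine tsum_congr fun p => ?_
    rw [mul_mul_mul_comm, x2, mul_mul_mul_comm (((p.1+p.2+1:ℤ):ℝ)+1/2), sgn_odd]; push_cast; ring

/-- The key differential identity. -/
lemma th_wronskian {t : ℝ} (ht : 0 < t) :
    thA2 t * th3 t - th2 t * thA3 t = th2 t * th3 t * th4 t ^ 4 / 4 := by
  have h2 : 0 < t / 2 := by linarith
  have a := thJ_sq h2
  have b := thJ_eq h2
  rw [mul_div_cancel₀ _ (by norm_num : (2:ℝ) ≠ 0)] at a
  rw [← Real.exp_nat_mul] at b
  rw [show ((2:ℕ):ℝ) * -(t/2) = -t by push_cast; ring] at b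
  have c2 := th2_prod ht
  have c3 := th3_prod ht
  have c4 := th4_prod ht
  have h0 := exp_pos (-t)
  have h1 := xlt ht
  have p1 := qEi_pos h0.le h1
  have p2 := qEi_pos (Q := rexp (-t)^2) (by positivity) (pow_lt_one₀ h0.le h1 (by norm_num))
  have p4 := qEi_pos (Q := rexp (-t)^4) (by positivity) (pow_lt_one₀ h0.le h1 (by norm_num))
  have e : rexp (t/4) = rexp (t/2/4) * rexp (t/2/4) := by rw [← exp_add]; congr 1; ring
  have q := exp_pos (t/4)
  have : rexp (t/4) * (thA2 t * th3 t - th2 t * thA3 t) = qEi (rexp (-t))^6 / 2 := by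
    rw [show qEi (rexp (-t))^6 = (qEi (rexp (-t))^3)^2 by ring, ← b, e]
    linear_combination (-(rexp (t/2/4) * rexp (t/2/4))/2) * a
  have h : rexp (t/4) * (th2 t * th3 t * th4 t ^ 4 / 4) = qEi (rexp (-t))^6 / 2 := by
    rw [show rexp (t/4) * (th2 t * th3 t * th4 t ^ 4 / 4) = (rexp (t/4) * th2 t) * th3 t * th4 t ^ 4 / 4 by ring,
      c2, c3, c4]
    generalize qEi (rexp (-t)) = X at *
    generalize qEi (rexp (-t)^2) = Y at *
    generalize qEi (rexp (-t)^4) = Z at *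
    field_simp
    norm_num
  exact mul_left_cancel₀ q.ne' (this.trans h.symm)

lemma th34 {t : ℝ} (ht : 0 < t) : th4 (2*t) ^ 2 = th3 t * th4 t := by
  have h2 : 0 < 2 * t := by linarith
  rw [th4_prod h2, th3_prod ht, th4_prod ht]
  have h0 := exp_pos (-t)
  have h1 := xlt ht
  have p1 := qEi_pos h0.le h1
  have p2 := qEi_pos (Q := rexp (-t)^2) (by positivity) (pow_lt_one₀ h0.le h1 (by norm_num))
  have p4 := qEi_pos (Q := rexp (-t)^4) (by positivity) (pow_lt_one₀ h0.le h1 (by norm_num))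
  rw [show rexp (-(2*t)) = rexp (-t)^2 by rw [← Real.exp_nat_mul]; congr 1; push_cast; ring, ← pow_mul]
  norm_num
  field_simp

lemma th4_pos {t : ℝ} (ht : 0 < t) : 0 < th4 t := by
  rw [th4_prod ht]
  have h0 := exp_pos (-t)
  have h1 := xlt ht
  have p1 := qEi_pos h0.le h1
  have p2 := qEi_pos (Q := rexp (-t)^2) (by positivity) (pow_lt_one₀ h0.le h1 (by norm_num))
  positivity

/-- modular transformations -/
lemma th3_inv {a : ℝ} (ha : 0 < a) : th3 (π * a) ^ 2 = a⁻¹ * th3 (π / a) ^ 2 := by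
  have := Real.tsum_exp_neg_mul_int_sq ha
  rw [th3, th3]
  simp only [neg_mul] at this ⊢
  rw [this, mul_pow, ← Real.sqrt_eq_rpow, div_pow, Real.sq_sqrt ha.le]
  simp [neg_div]

lemma th4_inv {a : ℝ} (ha : 0 < a) : th4 (π * a) ^ 2 = a⁻¹ * th2 (π / a) ^ 2 := by
  have h := Complex.tsum_exp_neg_quadratic (a := a) (by simpa using ha) (Complex.I / 2)
  have e1 : ∑' n : ℤ, Complex.exp (-π * a * n^2 + 2 * π * (Complex.I / 2) * n) = ((th4 (π * a) : ℝ) : ℂ) := by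
    rw [th4, Complex.ofReal_tsum]
    refine tsum_congr fun n => ?_
    rw [Complex.exp_add, show 2 * (π:ℂ) * (Complex.I / 2) * n = n * (π * Complex.I) by ring, Complex.exp_int_mul,
      Complex.exp_pi_mul_I]
    push_cast
    rw [mul_comm]; congr 2; ring
  have e2 : ∑' n : ℤ, Complex.exp (-π / a * (n + Complex.I * (Complex.I / 2))^2) = ((th2 (π / a) : ℝ) : ℂ) := by
    rw [th2, Complex.ofReal_tsum, ← (Equiv.addRight (1:ℤ)).tsum_eq]
    refine tsum_congr fun n => ?_
    push_cast
    congr 1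
    simp only [Equiv.coe_addRight]
    rw [show Complex.I * (Complex.I / 2) = (Complex.I * Complex.I) / 2 by ring, Complex.I_mul_I]
    push_cast
    ring
  rw [e1, e2] at h
  have h' : th4 (π * a) = 1 / a ^ (1/2 : ℝ) * th2 (π / a) := by
    have : ((a:ℂ)) ^ (1/2 : ℂ) = ((a ^ (1/2:ℝ) : ℝ) : ℂ) := by
      rw [Complex.ofReal_cpow ha.le]; push_cast; rfl
    rw [this] at h
    exact_mod_cast h
  rw [h', mul_pow, ← Real.sqrt_eq_rpow, div_pow, Real.sq_sqrt ha.le]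
  simp


lemma alg_param {a b c d : ℝ} (ha : 0 < a) (hb : 0 < b) (hc : 0 < c) (hd : 0 < d)
    (h1 : a^4 + c^4 = 1) (h2 : b^4 + d^4 = 1) (h3 : a*b + c*d = 1) (hab : b < a) :
    ∃ p : ℝ, 0 < p ∧ p < 1 ∧ b^4 * (1+2*p) = p^3*(2+p) ∧ a^4 * (1+2*p)^3 = p*(2+p)^3 ∧
      c^4 * (1+2*p)^3 = (1+p)*(1-p)^3 ∧ d^4*(1+2*p) = (1+p)^3*(1-p) ∧
      c*d*(1+2*p) = 1-p^2 ∧ a*b*(1+2*p) = p*(2+p) := by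
  obtain ⟨u, hu, rfl⟩ : ∃ u, 0 < u ∧ a = u^2 := ⟨√a, sqrt_pos.2 ha, (sq_sqrt ha.le).symm⟩
  obtain ⟨v, hv, rfl⟩ : ∃ v, 0 < v ∧ b = v^2 := ⟨√b, sqrt_pos.2 hb, (sq_sqrt hb.le).symm⟩
  have hcd : 0 < c * d := by positivity
  have e0 : (c*d)^4 = (1 - (u^2)^4) * (1-(v^2)^4) := by
    rw [show 1 - (u^2)^4 = c^4 by linarith, show 1 - (v^2)^4 = d^4 by linarith]; ring
  have e1 : c*d = 1 - u^2*v^2 := by linarith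
  have hlt : 0 < 1 - u^2*v^2 := by rw [← e1]; exact hcd
  rw [e1] at e0
  have huv : v < u := lt_of_pow_lt_pow_left₀ 2 hu.le hab
  have e2 : (u^4 - v^4)^2 = (2*u*v*(1-u^2*v^2))^2 := by linear_combination e0
  have h4 : v^4 < u^4 := pow_lt_pow_left₀ huv hv.le (by norm_num)
  have e3 : u^4 - v^4 = 2*u*v*(1-u^2*v^2) := by
    have : 0 < 2*u*v*(1-u^2*v^2) := by positivity
    exact (pow_left_inj₀ (by linarith) this.le (by norm_num)).1 e2
  obtain ⟨p, hp⟩ : ∃ p, p = v^3/u := ⟨_, rfl⟩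
  have hp0 : 0 < p := by rw [hp]; positivity
  have hpu : p * u = v^3 := by rw [hp]; field_simp
  have hq : 0 < 1 + 2*p := by linarith
  have f1 : u^2*v^2*(1+2*p) = p*(2+p) := by
    have hu2 : u^2 ≠ 0 := by positivity
    apply mul_left_cancel₀ hu2
    have : u^2 * (u^2*v^2*(1+2*p)) = u^4*v^2 + 2*u^3*v^2*(p*u) := by ring
    rw [this]
    have : u^2*(p*(2+p)) = 2*u*(p*u) + (p*u)^2 := by ring
    rw [this, hpu]
    linear_combination v^2*e3
  have f2 : c*d*(1+2*p) = 1-p^2 := by rw [e1]; linear_combination -f1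
  have hp1 : p < 1 := by
    have : 0 < 1 - p^2 := by rw [← f2]; positivity
    nlinarith
  have f3 : (v^2)^4 * (1+2*p) = p^3*(2+p) := by
    have : (v^2)^4 = p^2 * (u^2*v^2) := by
      have : p^2*(u^2*v^2) = (p*u)^2*v^2 := by ring
      rw [this, hpu]; ring
    rw [this]; linear_combination p^2*f1
  have f4 : (u^2)^4 * (1+2*p)^3 = p*(2+p)^3 := by
    have hv4 : v^8*(1+2*p) ≠ 0 := by positivity
    apply mul_right_cancel₀ hv4
    have e : (u^2)^4*(1+2*p)^3*(v^8*(1+2*p)) = (u^2*v^2*(1+2*p))^4 := by ring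
    have e' : v^8*(1+2*p) = (v^2)^4*(1+2*p) := by ring
    rw [e, e', f1, f3]; ring
  refine ⟨p, hp0, hp1, f3, f4, ?_, ?_, f2, f1⟩
  · rw [show c^4 = 1 - (u^2)^4 by linarith]; linear_combination -f4
  · rw [show d^4 = 1 - (v^2)^4 by linarith]; linear_combination -f3

noncomputable def rA (t : ℝ) : ℝ := th2 t / th3 t

lemma hasDerivAt_rA {t : ℝ} (ht : 0 < t) : HasDerivAt rA (-(rA t * th4 t^4/4)) t := by
  have h3 := th3_pos ht
  have := (hasDerivAt_th2 ht).div (hasDerivAt_th3 ht) h3.ne'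
  refine this.congr_deriv ?_
  rw [rA]
  have w := th_wronskian ht
  field_simp
  linear_combination -4*w

lemma rA_pos {t : ℝ} (ht : 0 < t) : 0 < rA t := div_pos (th2_pos ht) (th3_pos ht)

lemma rA_anti : StrictAntiOn rA (Set.Ioi 0) := by
  refine strictAntiOn_of_deriv_neg (convex_Ioi 0) (fun t ht => (hasDerivAt_rA ht).continuousAt.continuousWithinAt) ?_
  intro t ht
  rw [interior_Ioi] at ht
  rw [(hasDerivAt_rA ht).deriv]
  have := rA_pos ht
  have := th4_pos ht
  simp only [Left.neg_neg_iff]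
  positivity

noncomputable def rC (t : ℝ) : ℝ := th4 t / th3 t

lemma rC_pos {t : ℝ} (ht : 0 < t) : 0 < rC t := div_pos (th4_pos ht) (th3_pos ht)

lemma rAC {t : ℝ} (ht : 0 < t) : rA t^4 + rC t^4 = 1 := by
  have h3 := th3_pos ht
  have := th_quartic ht
  rw [rA, rC]; field_simp; linarith

lemma rACcub {t : ℝ} (ht : 0 < t) : rA t * rA (3*t) + rC t * rC (3*t) = 1 := by
  have h3 := th3_pos ht
  have h3' := th3_pos (t := 3*t) (by linarith)
  have := th_cubic ht
  rw [rA, rC, rA, rC]; field_simp; linarith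

lemma hasDerivAt_rA3 {t : ℝ} (ht : 0 < t) :
    HasDerivAt (fun t => rA (3*t)) (-(3*(rA (3*t) * th4 (3*t)^4/4))) t := by
  have h : HasDerivAt (fun t : ℝ => 3*t) 3 t := by simpa using (hasDerivAt_id t).const_mul 3
  have := HasDerivAt.comp t (hasDerivAt_rA (t := 3*t) (by linarith)) h
  refine this.congr_deriv ?_
  ring

/-- derivative of the cubic modular relation -/
lemma rA_diffrel {t : ℝ} (ht : 0 < t) :
    rA t * rA (3*t) * (th4 t^4 + 3*th4 (3*t)^4) * (rC t * rC (3*t))^3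
      = (rA t^4 * th4 t^4 * rC (3*t)^4 + 3 * rA (3*t)^4 * th4 (3*t)^4 * rC t ^4) := by
  have h3 : 0 < 3*t := by linarith
  have d1 := ((hasDerivAt_const t (1:ℝ)).sub ((hasDerivAt_rA ht).mul (hasDerivAt_rA3 ht))).pow 4
  have d2 := ((hasDerivAt_const t (1:ℝ)).sub ((hasDerivAt_rA ht).pow 4)).mul
    ((hasDerivAt_const t (1:ℝ)).sub ((hasDerivAt_rA3 ht).pow 4))
  have eq := HasDerivAt.unique d1 (d2.congr_of_eventuallyEq (by
    filter_upwards [eventually_gt_nhds ht] with x hx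
    have e1 := rAC hx
    have e2 := rAC (t := 3*x) (by linarith)
    have e3 := rACcub hx
    simp only [Pi.pow_apply, Pi.sub_apply, Pi.mul_apply]
    rw [show 1 - rA x * rA (3*x) = rC x * rC (3*x) by linarith, show 1 - rA x^4 = rC x^4 by linarith,
      show 1 - rA (3*x)^4 = rC (3*x)^4 by linarith]
    ring))
  simp only [Pi.pow_apply, Pi.sub_apply, Pi.mul_apply] at eq
  have e1 := rAC ht
  have e2 := rAC h3
  have e3 := rACcub ht
  rw [show 1 - rA t * rA (3*t) = rC t * rC (3*t) by linarith, show 1 - rA t^4 = rC t^4 by linarith,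
      show 1 - rA (3*t)^4 = rC (3*t)^4 by linarith] at eq
  norm_num at eq
  linear_combination eq

noncomputable def sS (t : ℝ) : ℝ := th2 (3*t)^2 / th2 t^2

lemma main_param {t : ℝ} (ht : 0 < t) : 0 < sS t ∧ sS t < 1/3 ∧
    (1 - sS t) * th3 t^2 = (1+3*sS t) * th3 (3*t)^2 ∧
    rA t^4 * ((1-sS t)*(1+3*sS t)^3) = 16 * sS t ∧
    rC t^4 * ((1-sS t)*(1+3*sS t)^3) = (1+sS t)*(1-3*sS t)^3 ∧
    rC (3*t)^4 * ((1-sS t)^3*(1+3*sS t)) = (1+sS t)^3*(1-3*sS t) ∧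
    rC t * rC (3*t) * ((1-sS t)*(1+3*sS t)) = (1+sS t)*(1-3*sS t) := by
  have h3 : 0 < 3*t := by linarith
  obtain ⟨p, p0, p1, e1, e2, e3, e4, e5, e6⟩ := alg_param (rA_pos ht) (rA_pos h3) (rC_pos ht) (rC_pos h3)
    (rAC ht) (rAC h3) (rACcub ht) (rA_anti ht h3 (by linarith))
  have dr := rA_diffrel ht
  have q3 := th3_pos ht
  have q3' := th3_pos h3
  have c4 : th4 t = rC t * th3 t := by rw [rC]; field_simp
  have c4' : th4 (3*t) = rC (3*t) * th3 (3*t) := by rw [rC]; field_simp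
  have c2 : th2 t = rA t * th3 t := by rw [rA]; field_simp
  have c2' : th2 (3*t) = rA (3*t) * th3 (3*t) := by rw [rA]; field_simp
  have hs : sS t = (rA (3*t) * th3 (3*t))^2 / (rA t * th3 t)^2 := by rw [sS, c2, c2']
  rw [c4, c4'] at dr
  have ra := rA_pos ht
  have rb := rA_pos h3
  have rc := rC_pos ht
  have rd := rC_pos h3
  generalize rA t = a at *
  generalize rA (3*t) = b at *
  generalize rC t = c at *
  generalize rC (3*t) = d at *
  generalize th3 t = H at *
  generalize th3 (3*t) = K at *
  have w : 0 < 1 + 2*p := by linarith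
  have dr2 : a*b*(c^4*H^4 + 3*(d^4*K^4)) = (c*d)*(a^4*H^4+3*b^4*K^4) := by
    have : (c*d)^3 ≠ 0 := by positivity
    apply mul_right_cancel₀ this
    linear_combination dr
  have hH4 : H^4 = (1+2*p)^2*K^4 := by
    have k : -3*(p*(2+p)*(1-p^2)*(1+2*p)) ≠ 0 := by
      have : 0 < 1 - p^2 := by nlinarith
      have : 0 < p*(2+p)*(1-p^2)*(1+2*p) := by positivity
      linarith
    apply mul_left_cancel₀ k
    have l1 : (a*b*(1+2*p))*((c^4*(1+2*p)^3)*H^4 + 3*((d^4*(1+2*p))*K^4)*(1+2*p)^2)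
        = (c*d*(1+2*p))*((a^4*(1+2*p)^3)*H^4+3*(b^4*(1+2*p))*K^4*(1+2*p)^2) := by
      linear_combination (1+2*p)^4*dr2
    rw [e6, e3, e4, e5, e2, e1] at l1
    linear_combination l1
  have hH2 : H^2 = (1+2*p)*K^2 := by
    refine (pow_left_inj₀ (by positivity) (by positivity) (n := 2) (by norm_num)).1 ?_
    linear_combination hH4
  have ab2 : b^2 * (2+p) = p * (1+2*p) * a^2 := by
    refine (pow_left_inj₀ (by positivity) (by positivity) (n := 2) (by norm_num)).1 ?_
    have : (1+2*p)^3 ≠ 0 := by positivity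
    apply mul_right_cancel₀ this
    linear_combination (2+p)^2*(1+2*p)^2*e1 - p^2*(1+2*p)^2*e2
  have hsp : sS t = p/(2+p) := by
    rw [hs, div_eq_div_iff (by positivity) (by positivity)]
    linear_combination K^2*ab2 - p*a^2*hH2
  have z : 0 < 2 + p := by linarith
  obtain ⟨i, hi⟩ : ∃ i, i = (2+p)⁻¹ := ⟨_, rfl⟩
  have i0 : 0 < i := by rw [hi]; positivity
  have hi1 : i*(2+p) = 1 := by rw [hi]; field_simp
  have hi3 : i^3*(2+p)^3 = 1 := by rw [← mul_pow, hi1, one_pow]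
  have g0 : sS t = p*i := by rw [hsp, hi]; ring
  have g1 : 1 - sS t = 2*i := by rw [g0]; linear_combination -hi1
  have g2 : 1 + 3*sS t = 2*(1+2*p)*i := by rw [g0]; linear_combination -hi1
  have g3 : 1 + sS t = 2*(1+p)*i := by rw [g0]; linear_combination -hi1
  have g4 : 1 - 3*sS t = 2*(1-p)*i := by rw [g0]; linear_combination -hi1
  rw [g1, g2, g3, g4]
  refine ⟨by rw [g0]; positivity, ?_, ?_, ?_, ?_, ?_, ?_⟩
  · rw [hsp, div_lt_div_iff₀ z (by norm_num)]; linarith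
  · rw [hH2]; ring
  · rw [g0]; linear_combination 16*i^4*e2 + 16*p*i*hi3
  · linear_combination 16*i^4*e3
  · linear_combination 16*i^4*e4
  · linear_combination 4*i^2*e5

lemma hasDerivAt_sS {t : ℝ} (ht : 0 < t) :
    HasDerivAt sS (-(sS t * (th3 t * th4 t * (th3 (3*t) * th4 (3*t))))) t := by
  have h3 : 0 < 3*t := by linarith
  have h : HasDerivAt (fun t : ℝ => 3*t) 3 t := by simpa using (hasDerivAt_id t).const_mul 3
  have p2 := th2_pos ht
  have D : DifferentiableAt ℝ sS t :=
    (((HasDerivAt.comp t (hasDerivAt_th2 h3) h).pow 2).div ((hasDerivAt_th2 ht).pow 2)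
      (by simp only [Pi.pow_apply]; positivity)).differentiableAt
  have hd := D.hasDerivAt
  refine hd.congr_deriv ?_
  obtain ⟨s0, s1, e1, e2, e3, e4, e5⟩ := main_param ht
  have l := ((hasDerivAt_rA ht).pow 4).mul (((hasDerivAt_const t (1:ℝ)).sub hd).mul
    (((hasDerivAt_const t (1:ℝ)).add (hd.const_mul 3)).pow 3))
  have eq := l.unique ((hd.const_mul 16).congr_of_eventuallyEq (by
    filter_upwards [eventually_gt_nhds ht] with x hx
    exact (main_param hx).2.2.2.1))
  simp only [Pi.pow_apply, Pi.sub_apply, Pi.mul_apply, Pi.add_apply] at eq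
  norm_num at eq
  have q3 := th3_pos ht
  have q3' := th3_pos h3
  have c4 : th4 t = rC t * th3 t := by rw [rC]; field_simp
  have c4' : th4 (3*t) = rC (3*t) * th3 (3*t) := by rw [rC]; field_simp
  rw [c4] at eq
  rw [c4, c4']
  have ra := rA_pos ht
  have rc := rC_pos ht
  generalize deriv sS t = y at *
  generalize sS t = s at *
  generalize rA t = a at *
  generalize rC t = c at *
  generalize rC (3*t) = d at *
  generalize th3 t = H at *
  generalize th3 (3*t) = K at *
  have k1 : 0 < 1 - 3*s := by linarith
  have k2 : 0 < 1 - s := by linarith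
  have k3 : 0 < 1 + 3*s := by linarith
  -- y (1-3s)^2 = - s (1-s)(1+3s) c^4 H^4
  have f1 : y*(1-3*s)^2 = -(s*((1-s)*(1+3*s)*(c*H)^4)) := by
    have : 16 ≠ (0:ℝ) := by norm_num
    apply mul_left_cancel₀ this
    linear_combination -(1-s)*(1+3*s)*eq - ((c*H)^4*(1-s)*(1+3*s) - y*(8-12*s))*e2
  have f2 : (1-3*s)^2 * (H*(c*H)*(K*(d*K))) = (1-s)*(1+3*s)*(c*H)^4 := by
    have : (1-s)*(1+3*s)^2 ≠ 0 := by positivity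
    apply mul_right_cancel₀ this
    linear_combination (1+3*s)*(1-3*s)^2*H^2*K^2*e5 - (1-3*s)^3*(1+s)*H^2*e1 - (1-s)*H^4*e3
  have : (1-3*s)^2 ≠ 0 := by positivity
  apply mul_right_cancel₀ this
  linear_combination f1 + s * f2

lemma hasProd_npow {f : ℕ → ℝ} {a : ℝ} (h : HasProd f a) (n : ℕ) : HasProd (fun j => f j ^ n) (a^n) := by
  have : Tendsto _ _ _ := Tendsto.pow h n
  unfold HasProd
  refine this.congr fun s => ?_
  rw [Finset.prod_pow]

lemma hasProd_ndiv {f g : ℕ → ℝ} {a b : ℝ} (h : HasProd f a) (h' : HasProd g b) (hb : b ≠ 0) :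
    HasProd (fun j => f j / g j) (a/b) := by
  have : Tendsto _ _ _ := Tendsto.div h h' hb
  unfold HasProd
  refine this.congr fun s => ?_
  simp

lemma hasProd_k {q : ℝ} (h0 : 0 ≤ q) (h1 : q < 1) (k : ℕ) (hk : k ≠ 0) :
    HasProd (fun j : ℕ => 1 - q^(k*(j+1))) (qEi (q^k)) := by
  have := hasProd_qEi (Q := q^k) (by positivity) (pow_lt_one₀ h0 h1 hk)
  simpa only [← pow_mul] using this

lemma qEik_pos {q : ℝ} (h0 : 0 ≤ q) (h1 : q < 1) (k : ℕ) (hk : k ≠ 0) : 0 < qEi (q^k) :=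
  qEi_pos (Q := q^k) (by positivity) (pow_lt_one₀ h0 h1 hk)

lemma U2_eq {q : ℝ} (h0 : 0 ≤ q) (h1 : q < 1) :
    U2 q = qEi q^8 * qEi (q^6)^6 / qEi (q^2)^10 := by
  have p2 := qEik_pos h0 h1 2 (by norm_num)
  exact (hasProd_ndiv ((hasProd_npow (hasProd_qEi h0 h1) 8).mul
    (hasProd_npow (hasProd_k h0 h1 6 (by norm_num)) 6))
    (hasProd_npow (hasProd_k h0 h1 2 (by norm_num)) 10) (by positivity)).tprod_eq

lemma V2_eq {q : ℝ} (h0 : 0 ≤ q) (h1 : q < 1) :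
    V2 q = q * (qEi q^4 * qEi (q^6)^8 / (qEi (q^2)^8 * qEi (q^3)^4)) := by
  have p2 := qEik_pos h0 h1 2 (by norm_num)
  have p3 := qEik_pos h0 h1 3 (by norm_num)
  have := (hasProd_ndiv ((hasProd_npow (hasProd_qEi h0 h1) 4).mul
    (hasProd_npow (hasProd_k h0 h1 6 (by norm_num)) 8))
    ((hasProd_npow (hasProd_k h0 h1 2 (by norm_num)) 8).mul
     (hasProd_npow (hasProd_k h0 h1 3 (by norm_num)) 4)) (by positivity)).tprod_eq
  rw [V2, ← this]

lemma V2_sS {t : ℝ} (ht : 0 < t) : V2 (rexp (-(2*t))) = sS t^2 := by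
  have h3 : 0 < 3*t := by linarith
  have h0 := exp_pos (-t)
  have h1 := xlt ht
  rw [V2_eq (exp_pos _).le (xlt (by linarith)), sS]
  have c := th2_prod ht
  have c' := th2_prod h3
  have e1 : rexp (-(2*t)) = rexp (-t)^2 := by rw [← Real.exp_nat_mul]; congr 1; push_cast; ring
  have e3 : rexp (-(3*t)) = rexp (-t)^3 := by rw [← Real.exp_nat_mul]; congr 1; push_cast; ring
  have e4 : rexp (3*t/4) = rexp (t/4)^3 := by rw [← Real.exp_nat_mul]; congr 1; push_cast; ring
  have e5 : rexp (-t) * rexp (t/4)^4 = 1 := by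
    rw [← Real.exp_nat_mul, ← exp_add]; simp; ring
  rw [e3, e4, ← pow_mul, ← pow_mul] at c'
  norm_num at c'
  rw [e1, ← pow_mul, ← pow_mul, ← pow_mul]
  norm_num
  have p2 := qEik_pos h0.le h1 2 (by norm_num)
  have p4 := qEik_pos h0.le h1 4 (by norm_num)
  have p6 := qEik_pos h0.le h1 6 (by norm_num)
  have p12 := qEik_pos h0.le h1 12 (by norm_num)
  have g := exp_pos (t/4)
  have f := th2_pos ht
  have hA : th2 t = 2 * qEi (rexp (-t)^4)^2 / qEi (rexp (-t)^2) / rexp (t/4) := by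
    rw [eq_div_iff g.ne', mul_comm, c]; field_simp
  have hB : th2 (3*t) = 2 * qEi (rexp (-t)^12)^2 / qEi (rexp (-t)^6) / rexp (t/4)^3 := by
    rw [eq_div_iff (by positivity), mul_comm, c']; field_simp
  rw [hA, hB]
  have e6 : rexp (-t) = 1 / rexp (t/4)^4 := by rw [eq_div_iff (by positivity)]; exact e5
  generalize qEi (rexp (-t)^2) = A at *
  generalize qEi (rexp (-t)^4) = B at *
  generalize qEi (rexp (-t)^6) = C at *
  generalize qEi (rexp (-t)^12) = D at *
  rw [e6]
  field_simp

lemma U2_th {t : ℝ} (ht : 0 < t) : rexp (-(2*t)) * U2 (rexp (-(2*t))) =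
    V2 (rexp (-(2*t))) * (th3 t * th4 t * (th3 (3*t) * th4 (3*t))) := by
  have h3 : 0 < 3*t := by linarith
  have h0 := exp_pos (-(2*t))
  have h1 : rexp (-(2*t)) < 1 := xlt (by linarith)
  rw [← th34 ht, ← th34 h3, V2_eq h0.le h1, U2_eq h0.le h1, th4_prod (by linarith), th4_prod (by linarith)]
  have e3 : rexp (-(2*(3*t))) = rexp (-(2*t))^3 := by rw [← Real.exp_nat_mul]; congr 1; push_cast; ring
  rw [e3, ← pow_mul]
  norm_num
  have p1 := qEi_pos h0.le h1
  have p2 := qEik_pos h0.le h1 2 (by norm_num)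
  have p3 := qEik_pos h0.le h1 3 (by norm_num)
  have p6 := qEik_pos h0.le h1 6 (by norm_num)
  field_simp

lemma V2_deriv {q : ℝ} (h0 : 0 < q) (h1 : q < 1) : HasDerivAt V2 (U2 q) q := by
  have hl : 0 < -(log q)/2 := by have := log_neg h0 h1; linarith
  have ex : ∀ x : ℝ, 0 < x → rexp (-(2*(-(log x)/2))) = x := by
    intro x hx
    rw [show -(2*(-(log x)/2)) = log x by ring, exp_log hx]
  have d1 : HasDerivAt (fun x => -(log x)/2) (-(q⁻¹)/2) q := ((hasDerivAt_log h0.ne').neg).div_const 2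
  have d2 := (HasDerivAt.comp q (hasDerivAt_sS hl) d1).pow 2
  have d3 := d2.congr_of_eventuallyEq (f₁ := V2) (by
    filter_upwards [eventually_gt_nhds h0, eventually_lt_nhds h1] with x hx hx1
    have hl : 0 < -(log x)/2 := by have := log_neg hx hx1; linarith
    have := V2_sS hl
    rw [ex x hx] at this
    exact this)
  refine d3.congr_deriv ?_
  have u := U2_th hl
  rw [V2_sS hl, ex q h0] at u
  simp only [Function.comp_apply]
  generalize -(log q)/2 = T at *
  apply mul_left_cancel₀ h0.ne'
  rw [u]
  norm_num
  field_simp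

lemma U2_nonneg {q : ℝ} (h0 : 0 ≤ q) (h1 : q < 1) : 0 ≤ U2 q := by
  rw [U2_eq h0 h1]
  have p1 := qEi_pos h0 h1
  have p2 := qEik_pos h0 h1 2 (by norm_num)
  have p6 := qEik_pos h0 h1 6 (by norm_num)
  positivity

lemma qEi_le_one {Q : ℝ} (h0 : 0 ≤ Q) (h1 : Q < 1) : qEi Q ≤ 1 := by
  refine le_of_tendsto' (hasProd_qEi h0 h1) fun s => ?_
  refine Finset.prod_le_one (fun i _ => ?_) (fun i _ => ?_)
  · linarith [pow_le_one₀ (n := i+1) h0 h1.le]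
  · linarith [pow_nonneg h0 (i+1)]

lemma qEi_anti {Q R : ℝ} (h0 : 0 ≤ Q) (hQR : Q ≤ R) (h1 : R < 1) : qEi R ≤ qEi Q := by
  refine le_of_tendsto_of_tendsto' (hasProd_qEi (h0.trans hQR) h1) (hasProd_qEi h0 (hQR.trans_lt h1)) fun s => ?_
  refine Finset.prod_le_prod (fun i _ => ?_) (fun i _ => ?_)
  · linarith [pow_le_one₀ (n := i+1) (h0.trans hQR) h1.le]
  · linarith [pow_le_pow_left₀ h0 hQR (i+1)]

lemma V2_bound {q : ℝ} (h0 : 0 ≤ q) (h1 : q ≤ 1/2) : 0 ≤ V2 q ∧ V2 q ≤ q * (1/(qEi (1/2)^8*qEi (1/2)^4)) := by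
  have h1' : q < 1 := by linarith
  have p1 := qEi_pos h0 h1'
  have p2 := qEik_pos h0 h1' 2 (by norm_num)
  have p3 := qEik_pos h0 h1' 3 (by norm_num)
  have p6 := qEik_pos h0 h1' 6 (by norm_num)
  have c := qEi_pos (Q := 1/2) (by norm_num) (by norm_num)
  rw [V2_eq h0 h1']
  refine ⟨by positivity, ?_⟩
  have l1 := qEi_le_one h0 h1'
  have l6 := qEi_le_one (Q := q^6) (by positivity) (pow_lt_one₀ h0 h1' (by norm_num))
  have l2 : qEi (1/2) ≤ qEi (q^2) := qEi_anti (by positivity) (by nlinarith) (by norm_num)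
  have l3 : qEi (1/2) ≤ qEi (q^3) := qEi_anti (by positivity)
    ((pow_le_of_le_one h0 h1'.le (by norm_num)).trans h1) (by norm_num)
  gcongr
  exact mul_le_one₀ (pow_le_one₀ p1.le l1) (by positivity) (pow_le_one₀ p6.le l6)

lemma V2_tendsto : Tendsto V2 (𝓝[≥] 0) (𝓝 0) := by
  have h : Tendsto (fun q : ℝ => q * (1/(qEi (1/2)^8*qEi (1/2)^4))) (𝓝[≥] 0) (𝓝 0) := by
    have : Tendsto (fun q : ℝ => q * (1/(qEi (1/2)^8*qEi (1/2)^4))) (𝓝 0) (𝓝 (0 * (1/(qEi (1/2)^8*qEi (1/2)^4)))) :=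
      tendsto_id.mul_const _
    rw [zero_mul] at this
    exact this.mono_left nhdsWithin_le_nhds
  have ev : ∀ᶠ q : ℝ in 𝓝[≥] 0, 0 ≤ q ∧ q ≤ 1/2 := by
    filter_upwards [self_mem_nhdsWithin, nhdsWithin_le_nhds (eventually_lt_nhds (b := (1/2:ℝ)) (by norm_num : (0:ℝ) < 1/2))] with q a b
    exact ⟨a, b.le⟩
  refine tendsto_of_tendsto_of_tendsto_of_le_of_le' tendsto_const_nhds h ?_ ?_
  · filter_upwards [ev] with q hq using (V2_bound hq.1 hq.2).1
  · filter_upwards [ev] with q hq using (V2_bound hq.1 hq.2).2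

lemma V2_zero : V2 0 = 0 := by rw [V2, zero_mul]

lemma V2_integral {q : ℝ} (h0 : 0 < q) (h1 : q < 1) : (∫ t in (0:ℝ)..q, U2 t) = V2 q := by
  have hc : ContinuousOn V2 (Set.Icc 0 q) := by
    intro x hx
    rcases hx.1.eq_or_lt with h | h
    · subst h
      have : ContinuousWithinAt V2 (Set.Ici 0) 0 := by
        unfold ContinuousWithinAt
        rw [V2_zero]; exact V2_tendsto
      exact this.mono fun y hy => hy.1
    · exact (V2_deriv h (hx.2.trans_lt h1)).continuousAt.continuousWithinAt
  have hd : ∀ x ∈ Set.Ioo 0 q, HasDerivAt V2 (U2 x) x := fun x hx => V2_deriv hx.1 (hx.2.trans h1)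
  have hi := intervalIntegral.integrableOn_deriv_of_nonneg hc hd
    (fun x hx => U2_nonneg hx.1.le (hx.2.trans h1))
  rw [intervalIntegral.integral_eq_sub_of_hasDerivAt_of_le h0.le hc hd
    ((intervalIntegrable_iff_integrableOn_Ioc_of_le h0.le).2 hi), V2_zero, sub_zero]

/-- special values -/
lemma val3 : V2 (rexp (-2*π/√3)) = (2-√3)^2/3 := by
  have h3 : (0:ℝ) < √3 := by positivity
  have hs : √3^2 = 3 := sq_sqrt (by norm_num)
  have ht : 0 < π/√3 := by positivity
  rw [show -2*π/√3 = -(2*(π/√3)) by ring, V2_sS ht]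
  obtain ⟨s0, s1, e1, -⟩ := main_param ht
  have i := th3_inv h3
  have e : π * √3 = 3*(π/√3) := by field_simp; rw [hs]
  rw [e] at i
  have q := th3_pos ht
  have key : (1 - sS (π/√3)) * √3 = 1 + 3 * sS (π/√3) := by
    have : th3 (π/√3)^2 ≠ 0 := by positivity
    apply mul_right_cancel₀ this
    rw [i] at e1
    have : √3 * (√3)⁻¹ = 1 := by field_simp
    linear_combination √3 * e1 + (1+3*sS (π/√3)) * th3 (π/√3)^2 * this
  have : sS (π/√3) = (√3-1)/(3+√3) := by
    rw [eq_div_iff (by positivity)]; linarith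
  rw [this, div_pow, div_eq_div_iff (by positivity) (by norm_num)]
  generalize √3 = r at *
  have r4 : r^4 = 9 := by rw [show r^4 = (r^2)^2 by ring, hs]; norm_num
  have r3 : r^3 = 3*r := by rw [show r^3 = r^2*r by ring, hs]
  ring_nf
  rw [r4, r3, hs]; ring

lemma val2 : V2 (rexp (-2*π/√2)) = (√6-2)^2/18 := by
  have h2 : (0:ℝ) < √2 := by positivity
  have hs : √2^2 = 2 := sq_sqrt (by norm_num)
  have h6 : √6^2 = 6 := sq_sqrt (by norm_num)
  have ht : 0 < π/√2 := by positivity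
  rw [show -2*π/√2 = -(2*(π/√2)) by ring, V2_sS ht]
  obtain ⟨s0, s1, e1, e2, e3, -⟩ := main_param ht
  have i := th4_inv h2
  have e : π * √2 = 2*(π/√2) := by field_simp; rw [hs]
  rw [e, th34 ht] at i
  have q := th3_pos ht
  have key : rA (π/√2)^8 = 4 * rC (π/√2)^4 := by
    rw [rA, rC, div_pow, div_pow]
    have : th2 (π/√2)^2 = √2 * (th3 (π/√2) * th4 (π/√2)) := by rw [i]; field_simp
    have : th2 (π/√2)^8 = 4 * (th3 (π/√2) * th4 (π/√2))^4 := by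
      rw [show th2 (π/√2)^8 = (th2 (π/√2)^2)^4 by ring, this, mul_pow, show √2^4 = (√2^2)^2 by ring, hs]; norm_num
    rw [this]; field_simp
  generalize sS (π/√2) = s at *
  generalize rA (π/√2) = a at *
  generalize rC (π/√2) = c at *
  have k : 64 * s^2 = (1-s^2)*(1-9*s^2)^3 := by
    have : a^8*((1-s)*(1+3*s)^3)^2 = (16*s)^2 := by rw [← e2]; ring
    rw [key] at this
    linear_combination (-1/4)*this + (1-s)*(1+3*s)^3*e3
  have f0 : 0 < s^2 := by positivity
  have f1 : s^2 < 1/9 := by nlinarith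
  have r1 : √6 < 5/2 := by nlinarith [sqrt_nonneg 6]
  have r2 : 12/5 < √6 := by nlinarith [sqrt_nonneg 6]
  have g : (√6-2)^2/18 = (5-2*√6)/9 := by linear_combination h6/18
  rw [g]
  generalize √6 = r at *
  generalize s^2 = f at *
  have kf : 64 * ((5-2*r)/9) = (1-(5-2*r)/9)*(1-9*((5-2*r)/9))^3 := by
    have r4 : r^4 = 36 := by rw [show r^4 = (r^2)^2 by ring, h6]; norm_num
    have r3 : r^3 = 6*r := by rw [show r^3 = r^2*r by ring, h6]
    ring_nf
    rw [r4, r3]; ring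
  have m1 : 0 ≤ 1-9*((5-2*r)/9) := by linarith
  have m2 : 0 ≤ 1-9*f := by linarith
  have m3 : 0 ≤ 1-f := by linarith
  have m4 : 0 ≤ 1-(5-2*r)/9 := by linarith
  rcases lt_trichotomy f ((5-2*r)/9) with h | h | h
  · exfalso
    have : (1-(5-2*r)/9)*(1-9*((5-2*r)/9))^3 ≤ (1-f)*(1-9*f)^3 := by
      exact mul_le_mul (by linarith) (pow_le_pow_left₀ (by assumption) (by linarith) 3) (by positivity) (by assumption)
    linarith
  · exact h
  · exfalso
    have : (1-f)*(1-9*f)^3 ≤ (1-(5-2*r)/9)*(1-9*((5-2*r)/9))^3 := by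
      exact mul_le_mul (by linarith) (pow_le_pow_left₀ (by assumption) (by linarith) 3) (by positivity) (by assumption)
    linarith

lemma val6 : V2 (rexp (-2*π/√6)) = (√2-1)^2/3 := by
  have h6 : (0:ℝ) < √6 := by positivity
  have hs : √6^2 = 6 := sq_sqrt (by norm_num)
  have h2 : √2^2 = 2 := sq_sqrt (by norm_num)
  have ht : 0 < π/√6 := by positivity
  have ht3 : 0 < 3*(π/√6) := by positivity
  rw [show -2*π/√6 = -(2*(π/√6)) by ring, V2_sS ht]
  obtain ⟨s0, s1, e1, e2, e3, e4, -⟩ := main_param ht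
  have i := th4_inv h6
  have e : π * √6 = 2*(3*(π/√6)) := by field_simp; rw [hs]; ring
  rw [e, th34 ht3] at i
  have j := th4_inv (a := √6/3) (by positivity)
  have e' : π * (√6/3) = 2*(π/√6) := by field_simp; rw [hs]; ring
  rw [e', th34 ht, show π/(√6/3) = 3*(π/√6) by field_simp] at j
  have q := th3_pos ht
  have q' := th3_pos ht3
  have p2 := th2_pos ht
  have hS : sS (π/√6) = th2 (3*(π/√6))^2 / th2 (π/√6)^2 := rfl
  have a1 : th2 (π/√6)^2 = √6 * (th3 (3*(π/√6)) * th4 (3*(π/√6))) := by rw [i]; field_simp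
  have a2 : th2 (3*(π/√6))^2 = √6/3 * (th3 (π/√6) * th4 (π/√6)) := by rw [j]; field_simp
  have c4 : th4 (π/√6) = rC (π/√6) * th3 (π/√6) := by rw [rC]; field_simp
  have c4' : th4 (3*(π/√6)) = rC (3*(π/√6)) * th3 (3*(π/√6)) := by rw [rC, div_mul_cancel₀ _ q'.ne']
  have rc := rC_pos ht
  have rd := rC_pos ht3
  rw [a1, a2, c4, c4'] at hS
  generalize rC (π/√6) = c at *
  generalize rC (3*(π/√6)) = d at *
  generalize th3 (π/√6) = H at *
  generalize th3 (3*(π/√6)) = K at *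
  generalize sS (π/√6) = s at *
  have b1 : 3*s*d*K^2 = c*H^2 := by
    rw [hS]; field_simp
  have b2 : 3*s*d*(1-s) = c*(1+3*s) := by
    have : K^2 ≠ 0 := by positivity
    apply mul_right_cancel₀ this
    linear_combination (1-s)*b1 + c*e1
  have k2 : 0 < 1 - s := by linarith
  have k3 : 0 < 1 + 3*s := by linarith
  have k4 : 0 < 1 - 3*s := by linarith
  have k5 : 0 < 1 + s := by linarith
  have b3 : (3*s)^4*(1+s)^2*(1-s)^2 = (1-3*s)^2*(1+3*s)^2 := by
    have b4 : (3*s*d*(1-s))^4 = (c*(1+3*s))^4 := by rw [b2]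
    have : (1+s)*(1-3*s) ≠ 0 := by positivity
    apply mul_right_cancel₀ this
    linear_combination (1-s)*(1+3*s)*b4 - (3*s)^4*(1-s)^2*e4 + (1+3*s)^2*e3
  have b5 : (3*s)^2*(1+s)*(1-s) = (1-3*s)*(1+3*s) := by
    refine (pow_left_inj₀ (by positivity) (by positivity) (n := 2) (by norm_num)).1 ?_
    linear_combination b3
  have r1 : 1 < √2 := by nlinarith [sqrt_nonneg 2]
  have g : (√2-1)^2/3 = 1 - 2*√2/3 := by linear_combination h2/3
  rw [g]
  generalize √2 = r at *
  have : (s^2 - (1-2*r/3)) * (s^2 - (1+2*r/3)) = 0 := by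
    linear_combination (-1/9)*b5 - 4/9*h2
  rcases mul_eq_zero.1 this with h | h
  · linarith
  · exfalso
    have : s^2 < 1 := pow_lt_one₀ s0.le (by linarith) (by norm_num)
    linarith

theorem stmt_2 :
    (∀ q : ℝ, 0 < q → q < 1 → (∫ t in (0:ℝ)..q, U2 t) = V2 q) ∧
    V2 (Real.exp (-2 * Real.pi / Real.sqrt 6)) = (Real.sqrt 2 - 1) ^ 2 / 3 ∧
    V2 (Real.exp (-2 * Real.pi / Real.sqrt 3)) = (2 - Real.sqrt 3) ^ 2 / 3 ∧
    V2 (Real.exp (-2 * Real.pi / Real.sqrt 2)) = (Real.sqrt 6 - 2) ^ 2 / 18 := by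
  exact ⟨fun q h0 h1 => V2_integral h0 h1, val6, val3, val2⟩
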